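/- For every τ ∈ ℍ and every z ∈ ℂ one has the generating function identity ∑_{n≥0} (−1)^n U_{2n}(q) (πz)^{2n+1}/(2n+1)! = −ϑ(z;τ)/(2 η(τ)³), the series on the left converging for all z ∈ ℂ. -/

import Mathlib

/-!
With `Tⱼ = j (j + 1) / 2`, expanding every `sin ((2j+1) π z)` in its Taylor series identifies the
left-hand side with `(∑ (-1)^j q^Tⱼ sin ((2j+1) π z)) / ∑ (-1)^j (2j+1) q^Tⱼ`. Pairing the
half-integers `±(j + 1/2)` in the theta series shows that the numerator is `-ϑ(z;τ) / (2 q^(1/8))`,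
so what remains is Jacobi's identity `∑ (-1)^j (2j+1) q^Tⱼ = ∏ (1 - qⁱ)³`.

Jacobi's identity is a degenerate case of the triple product. Multiplying a Laurent polynomial
`∑ aⱼ xʲ` by `(1 - Qx)(1 - Q/x)` replaces `aⱼ` by `(1 + Q²) aⱼ - Q (aⱼ₋₁ + aⱼ₊₁)`, so by summation
by parts the pairing `∑ aⱼ sⱼ` is multiplied by `1 - cQ + Q²` whenever `sⱼ₊₁ + sⱼ₋₁ = c sⱼ`. The
coefficients `(-1)^j q^Tⱼ [2n+1, n+j+1]_q` satisfy this recursion with `Q = q^(n+1)`, hence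
`∑ⱼ (-1)^j q^Tⱼ [2n+1, n+j+1]_q sⱼ = s₀ ∏_{i=1}^n (1 - c qⁱ + q^(2i))` when `s₋₁ = -s₀`.
As `n → ∞` every Gaussian binomial here tends to `∏ (1 - qⁱ)⁻¹`. The choice `sⱼ = sin ((2j+1) w)`,
`c = 2 cos (2w)` would give the product formula for `ϑ`; the limiting choice `sⱼ = 2j+1`, `c = 2`
gives Jacobi's identity.
-/

open Complex Filter
open scoped Real

noncomputable section

/-- `q = e^{2πiτ}`. -/
def qq (τ : ℂ) : ℂ := Complex.exp (2 * (π : ℂ) * Complex.I * τ)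

/-- The Jacobi theta function `ϑ(z;τ) = ∑_{n∈ℤ+1/2} e^{2πin(z+1/2)} q^{n²/2}`. -/
def jacobiThetaFn (z τ : ℂ) : ℂ :=
  ∑' n : ℤ, Complex.exp (2 * (π : ℂ) * Complex.I * ((n : ℂ) + 1 / 2) * (z + 1 / 2)) *
    Complex.exp ((π : ℂ) * Complex.I * τ * ((n : ℂ) + 1 / 2) ^ 2)

/-- The Dedekind eta function `η(τ) = q^{1/24} ∏_{n≥1} (1 - qⁿ)`. -/
def dedekindEtaFn (τ : ℂ) : ℂ :=
  Complex.exp (2 * (π : ℂ) * Complex.I * τ / 24) * ∏' n : ℕ, (1 - qq τ ^ (n + 1))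

/-- Ramanujan's series `U_{2n}(q)`:
numerator `∑_{j≥0} (−1)^j (2j+1)^{2n+1} q^{j(j+1)/2}` divided by
denominator `∑_{j≥0} (−1)^j (2j+1) q^{j(j+1)/2}`. -/
def Uram (n : ℕ) (q : ℂ) : ℂ :=
  (∑' j : ℕ, (-1 : ℂ) ^ j * ((2 * j + 1 : ℕ) : ℂ) ^ (2 * n + 1) * q ^ (j * (j + 1) / 2)) /
    (∑' j : ℕ, (-1 : ℂ) ^ j * ((2 * j + 1 : ℕ) : ℂ) * q ^ (j * (j + 1) / 2))

open Topology

section QChoose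

variable {R : Type*} [CommRing R] (q : R)

/-- The Gaussian binomial coefficient `[n, k]_q`, defined by the Pascal recursion so that it makes
sense for every `q` in a commutative ring; it is `0` for `n < k`. -/
def qChoose : ℕ → ℕ → R
  | _, 0 => 1
  | 0, _ + 1 => 0
  | n + 1, k + 1 => qChoose n k + q ^ (k + 1) * qChoose n (k + 1)

/-- The `q`-Pochhammer symbol `(q; q)ₙ = ∏_{i=1}^n (1 - qⁱ)`, the `q`-analogue of `n!` up to the
factor `(1 - q)ⁿ`. -/
def qPochhammer (n : ℕ) : R := ∏ i ∈ Finset.range n, (1 - q ^ (i + 1))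

lemma qChoose_zero_right (n : ℕ) : qChoose q n 0 = 1 := by
  cases n <;> rfl

lemma qChoose_succ_succ (n k : ℕ) :
    qChoose q (n + 1) (k + 1) = qChoose q n k + q ^ (k + 1) * qChoose q n (k + 1) := rfl

lemma qPochhammer_succ (n : ℕ) :
    qPochhammer q (n + 1) = qPochhammer q n * (1 - q ^ (n + 1)) :=
  Finset.prod_range_succ _ _

lemma qChoose_eq_zero_of_lt {n k : ℕ} (h : n < k) : qChoose q n k = 0 := by
  induction n generalizing k with
  | zero => obtain ⟨k, rfl⟩ := Nat.exists_eq_succ_of_ne_zero h.ne'; rfl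
  | succ n ih =>
    obtain ⟨k, rfl⟩ := Nat.exists_eq_succ_of_ne_zero (Nat.ne_zero_of_lt h)
    rw [qChoose_succ_succ, ih (by omega), ih (by omega), mul_zero, add_zero]

lemma qChoose_self (n : ℕ) : qChoose q n n = 1 := by
  induction n with
  | zero => rfl
  | succ n ih =>
    rw [qChoose_succ_succ, ih, qChoose_eq_zero_of_lt q n.lt_succ_self, mul_zero, add_zero]

lemma one_sub_pow_mul_qChoose_succ (n k : ℕ) :
    (1 - q ^ (k + 1)) * qChoose q n (k + 1) = (1 - q ^ (n - k)) * qChoose q n k := by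
  induction n generalizing k with
  | zero => rw [qChoose_eq_zero_of_lt q k.succ_pos, Nat.zero_sub]; simp
  | succ n ih =>
    cases k with
    | zero =>
      have h := ih 0
      simp only [qChoose_succ_succ, qChoose_zero_right, Nat.sub_zero, zero_add] at h ⊢
      linear_combination q * h
    | succ k =>
      have hpow : q ^ (k + 2) * q ^ (n - (k + 1)) * qChoose q n (k + 1)
          = q ^ (k + 1) * q ^ (n - k) * qChoose q n (k + 1) := by
        rcases lt_or_ge n (k + 1) with h | h
        · simp [qChoose_eq_zero_of_lt q h]
        · rw [← pow_add, ← pow_add]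
          congr 2
          omega
      rw [Nat.add_sub_add_right, qChoose_succ_succ q n (k + 1), qChoose_succ_succ q n k]
      linear_combination q ^ (k + 2) * ih (k + 1) + ih k - hpow

lemma qChoose_succ_succ' (n k : ℕ) :
    qChoose q (n + 1) (k + 1) = q ^ (n - k) * qChoose q n k + qChoose q n (k + 1) := by
  linear_combination qChoose_succ_succ q n k - one_sub_pow_mul_qChoose_succ q n k

lemma qChoose_symm_add (m k : ℕ) : qChoose q (m + k) k = qChoose q (m + k) m := by
  induction m generalizing k with
  | zero => rw [Nat.zero_add, qChoose_self, qChoose_zero_right]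
  | succ m ihm =>
    induction k with
    | zero => rw [Nat.add_zero, qChoose_self, qChoose_zero_right]
    | succ k ihk =>
      have h := ihm (k + 1)
      rw [show m + (k + 1) = m + 1 + k by ring] at h
      rw [← Nat.add_assoc, qChoose_succ_succ, qChoose_succ_succ', ihk, h,
        show m + 1 + k - m = k + 1 by omega]
      ring

lemma qChoose_add_mul_qPochhammer_mul_qPochhammer (m k : ℕ) :
    qChoose q (m + k) k * qPochhammer q m * qPochhammer q k = qPochhammer q (m + k) := by
  induction k generalizing m with
  | zero => simp [qChoose_zero_right, qPochhammer]
  | succ k ih =>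
    have h := one_sub_pow_mul_qChoose_succ q (m + 1 + k) k
    rw [Nat.add_sub_cancel] at h
    rw [show m + (k + 1) = m + 1 + k by ring, ← ih (m + 1), qPochhammer_succ, qPochhammer_succ]
    linear_combination qPochhammer q m * qPochhammer q k * h

end QChoose

section FiniteTripleProduct

variable {R : Type*} [CommRing R]

lemma triangle_add_one (j : ℕ) : (j + 1) * (j + 1 + 1) / 2 = j * (j + 1) / 2 + (j + 1) := by
  simpa [mul_comm] using Nat.triangle_succ (j + 1)

/-- The coefficient `(-1)^j q^(j(j+1)/2) [2n+1, n+j+1]_q`, which up to sign is the coefficient of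
`x^(j+1)` and of `x^(-j)` in MacMahon's finite triple product
`(1 - x) ∏_{i=1}^n (1 - qⁱ x) (1 - qⁱ x⁻¹)`. -/
def tripleProductCoeff (q : R) (n j : ℕ) : R :=
  (-1) ^ j * q ^ (j * (j + 1) / 2) * qChoose q (2 * n + 1) (n + j + 1)

lemma tripleProductCoeff_eq_zero_of_lt (q : R) {n j : ℕ} (h : n < j) :
    tripleProductCoeff q n j = 0 := by
  rw [tripleProductCoeff, qChoose_eq_zero_of_lt q (by omega), mul_zero]

lemma qChoose_add_two_add_one (q : R) {N k : ℕ} (h : k ≤ N) :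
    qChoose q (N + 2) (k + 2) = (1 + q ^ (N + 1)) * qChoose q N (k + 1)
      + q ^ (N - k) * qChoose q N k + q ^ (k + 2) * qChoose q N (k + 2) := by
  have hpow : q ^ (k + 2) * q ^ (N - (k + 1)) * qChoose q N (k + 1)
      = q ^ (N + 1) * qChoose q N (k + 1) := by
    rcases h.eq_or_lt with rfl | h
    · simp [qChoose_eq_zero_of_lt q k.lt_succ_self]
    · rw [← pow_add]
      congr 2
      omega
  rw [qChoose_succ_succ, qChoose_succ_succ', qChoose_succ_succ']
  linear_combination hpow

lemma tripleProductCoeff_succ_zero (q : R) (n : ℕ) :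
    tripleProductCoeff q (n + 1) 0 = (1 + (q ^ (n + 1)) ^ 2) * tripleProductCoeff q n 0
      - q ^ (n + 1) * (tripleProductCoeff q n 1 - tripleProductCoeff q n 0) := by
  have hsymm : qChoose q (2 * n + 1) n = qChoose q (2 * n + 1) (n + 1) := by
    have h := qChoose_symm_add q (n + 1) n
    rwa [show n + 1 + n = 2 * n + 1 by ring] at h
  have hrec := qChoose_add_two_add_one q (N := 2 * n + 1) (k := n) (by omega)
  rw [hsymm, show 2 * n + 1 - n = n + 1 by omega] at hrec
  simp only [tripleProductCoeff, show 2 * (n + 1) + 1 = 2 * n + 1 + 2 by ring, add_zero,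
    show n + 1 + 1 = n + 2 by ring, hrec]
  norm_num
  ring

lemma tripleProductCoeff_succ_succ (q : R) (n j : ℕ) :
    tripleProductCoeff q (n + 1) (j + 1) = (1 + (q ^ (n + 1)) ^ 2) * tripleProductCoeff q n (j + 1)
      - q ^ (n + 1) * (tripleProductCoeff q n j + tripleProductCoeff q n (j + 2)) := by
  rcases lt_or_ge n j with h | h
  · simp [tripleProductCoeff_eq_zero_of_lt, show n < j + 1 by omega, show n < j + 2 by omega, h]
  have hrec := qChoose_add_two_add_one q (N := 2 * n + 1) (k := n + j + 1) (by omega)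
  have hpow : q ^ (n + 1) = q ^ (j + 1) * q ^ (2 * n + 1 - (n + j + 1)) := by
    rw [← pow_add]
    congr 1
    omega
  have hrec' := congrArg (q ^ (j + 1) * ·) hrec
  simp only [tripleProductCoeff, show j + 2 = j + 1 + 1 by ring, triangle_add_one,
    show 2 * (n + 1) + 1 = 2 * n + 1 + 2 by ring, show n + 1 + (j + 1) + 1 = n + j + 1 + 2 by ring,
    show n + (j + 1) + 1 = n + j + 1 + 1 by ring, show n + (j + 1 + 1) + 1 = n + j + 1 + 2 by ring,
    pow_add _ (j * (j + 1) / 2)]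
  linear_combination (-1) ^ (j + 1) * q ^ (j * (j + 1) / 2) * hrec'
    - (-1) ^ (j + 1) * q ^ (j * (j + 1) / 2) * qChoose q (2 * n + 1) (n + j + 1) * hpow

lemma sum_range_mul_of_recurrence {Q c : R} {a b s : ℕ → R}
    (hb₀ : b 0 = (1 + Q ^ 2) * a 0 - Q * (a 1 - a 0))
    (hb : ∀ j, b (j + 1) = (1 + Q ^ 2) * a (j + 1) - Q * (a j + a (j + 2)))
    (hs₁ : s 1 = (c + 1) * s 0) (hs : ∀ j, s (j + 2) = c * s (j + 1) - s j) (M : ℕ) :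
    ∑ j ∈ Finset.range (M + 1), b j * s j
      = (1 - c * Q + Q ^ 2) * ∑ j ∈ Finset.range (M + 1), a j * s j
        - Q * (a (M + 1) * s M - a M * s (M + 1)) := by
  induction M with
  | zero => simp [hb₀, hs₁]; ring
  | succ M ih =>
    rw [Finset.sum_range_succ, ih, Finset.sum_range_succ _ (M + 1), hb, hs]
    ring

theorem sum_range_tripleProductCoeff_mul (q : R) {c : R} {s : ℕ → R}
    (hs₁ : s 1 = (c + 1) * s 0) (hs : ∀ j, s (j + 2) = c * s (j + 1) - s j) (n : ℕ) :
    ∑ j ∈ Finset.range (n + 1), tripleProductCoeff q n j * s j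
      = s 0 * ∏ i ∈ Finset.range n, (1 - c * q ^ (i + 1) + (q ^ (i + 1)) ^ 2) := by
  induction n with
  | zero => simp [tripleProductCoeff, qChoose_self]
  | succ n ih =>
    rw [sum_range_mul_of_recurrence (tripleProductCoeff_succ_zero q n)
      (tripleProductCoeff_succ_succ q n) hs₁ hs, Finset.sum_range_succ, ih,
      tripleProductCoeff_eq_zero_of_lt q (by omega : n < n + 1),
      tripleProductCoeff_eq_zero_of_lt q (by omega : n < n + 1 + 1), Finset.prod_range_succ]
    ring

end FiniteTripleProduct

section TripleProduct

variable {𝕜 : Type*} [NormedField 𝕜] {q : 𝕜}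

lemma one_sub_pow_succ_ne_zero (hq : ‖q‖ < 1) (n : ℕ) : 1 - q ^ (n + 1) ≠ 0 := by
  refine sub_ne_zero.2 fun h => ?_
  have hlt : ‖q ^ (n + 1)‖ < 1 := by
    simpa using pow_lt_one₀ (norm_nonneg q) hq n.succ_ne_zero
  exact hlt.ne (by rw [← h, norm_one])

lemma qPochhammer_ne_zero (hq : ‖q‖ < 1) (n : ℕ) : qPochhammer q n ≠ 0 :=
  Finset.prod_ne_zero_iff.2 fun i _ => one_sub_pow_succ_ne_zero hq i

lemma qChoose_add_eq_div (hq : ‖q‖ < 1) (m k : ℕ) :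
    qChoose q (m + k) k = qPochhammer q (m + k) * (qPochhammer q m)⁻¹ * (qPochhammer q k)⁻¹ := by
  rw [← qChoose_add_mul_qPochhammer_mul_qPochhammer]
  field_simp [qPochhammer_ne_zero hq]

lemma summable_norm_pow_succ (hq : ‖q‖ < 1) : Summable fun n : ℕ => ‖q ^ (n + 1)‖ := by
  simpa using (summable_nat_add_iff 1).2 (summable_geometric_of_lt_one (norm_nonneg q) hq)

lemma summable_norm_pow_triangle_mul_pow (hq : ‖q‖ < 1) (x : 𝕜) :
    Summable fun j : ℕ => ‖q ^ (j * (j + 1) / 2) * x ^ j‖ := by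
  have hratio : Tendsto (fun j : ℕ => ‖q ^ (j + 1) * x‖) atTop (𝓝 0) := by
    simpa using (((tendsto_pow_atTop_nhds_zero_of_norm_lt_one hq).comp
      (tendsto_add_atTop_nat 1)).mul_const x).norm
  refine summable_of_ratio_norm_eventually_le one_half_lt_one ?_
  filter_upwards [hratio.eventually_le_const one_half_pos] with j hj
  rw [norm_norm, norm_norm]
  calc ‖q ^ ((j + 1) * (j + 1 + 1) / 2) * x ^ (j + 1)‖
      = ‖q ^ (j + 1) * x‖ * ‖q ^ (j * (j + 1) / 2) * x ^ j‖ := by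
        rw [← norm_mul, triangle_add_one]
        ring_nf
    _ ≤ 1 / 2 * ‖q ^ (j * (j + 1) / 2) * x ^ j‖ := by gcongr

lemma summable_norm_pow_triangle_mul_odd (hq : ‖q‖ < 1) :
    Summable fun j : ℕ => ‖q ^ (j * (j + 1) / 2) * ((2 * j + 1 : ℕ) : 𝕜)‖ := by
  have hbernoulli (j : ℕ) : ‖((2 * j + 1 : ℕ) : 𝕜)‖ ≤ 3 ^ j := by
    calc ‖((2 * j + 1 : ℕ) : 𝕜)‖ ≤ (2 * j + 1 : ℕ) * ‖(1 : 𝕜)‖ := Nat.norm_cast_le _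
      _ = 1 + j * 2 := by rw [norm_one]; push_cast; ring
      _ ≤ (1 + 2) ^ j := one_add_mul_le_pow (by norm_num) j
      _ = 3 ^ j := by norm_num
  have hmajorant := (summable_norm_pow_triangle_mul_pow (q := ‖q‖) (by simpa using hq) 3).of_norm
  refine hmajorant.of_nonneg_of_le (fun _ => norm_nonneg _) fun j => ?_
  rw [norm_mul, norm_pow]
  gcongr
  exact hbernoulli j

lemma summable_norm_pow_triangle_mul_sinh (hq : ‖q‖ < 1) (x : ℝ) :
    Summable fun j : ℕ => ‖q‖ ^ (j * (j + 1) / 2) * Real.sinh ((2 * j + 1 : ℕ) * x) := by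
  have hsinh (y : ℝ) : |Real.sinh y| ≤ Real.exp |y| := by
    rw [Real.abs_sinh]
    linarith [Real.exp_sub_sinh |y|, Real.cosh_pos |y|]
  have hmajorant := (summable_norm_pow_triangle_mul_pow (q := ‖q‖) (by simpa using hq)
    (Real.exp (2 * |x|))).of_norm.mul_right (Real.exp |x|)
  refine Summable.of_norm_bounded hmajorant fun j => ?_
  calc ‖‖q‖ ^ (j * (j + 1) / 2) * Real.sinh ((2 * j + 1 : ℕ) * x)‖
      ≤ ‖q‖ ^ (j * (j + 1) / 2) * Real.exp |(2 * j + 1 : ℕ) * x| := by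
        rw [norm_mul, norm_pow, norm_norm, Real.norm_eq_abs]
        gcongr
        exact hsinh _
    _ = ‖q‖ ^ (j * (j + 1) / 2) * Real.exp (2 * |x|) ^ j * Real.exp |x| := by
        rw [mul_assoc, ← Real.exp_nat_mul, ← Real.exp_add, abs_mul, Nat.abs_cast]
        push_cast
        ring_nf

variable [CompleteSpace 𝕜]

lemma multipliable_one_sub_pow_succ (hq : ‖q‖ < 1) :
    Multipliable fun n : ℕ => 1 - q ^ (n + 1) := by
  simpa only [sub_eq_add_neg] using
    multipliable_one_add_of_summable (by simpa using summable_norm_pow_succ hq)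

lemma tprod_one_sub_pow_succ_ne_zero (hq : ‖q‖ < 1) : ∏' n : ℕ, (1 - q ^ (n + 1)) ≠ 0 := by
  simpa only [sub_eq_add_neg] using
    tprod_one_add_ne_zero_of_summable (f := fun n : ℕ => -q ^ (n + 1))
      (fun n => by simpa only [← sub_eq_add_neg] using one_sub_pow_succ_ne_zero hq n)
      (by simpa using summable_norm_pow_succ hq)

lemma tendsto_qPochhammer (hq : ‖q‖ < 1) :
    Tendsto (qPochhammer q) atTop (𝓝 (∏' n : ℕ, (1 - q ^ (n + 1)))) :=
  (multipliable_one_sub_pow_succ hq).hasProd.tendsto_prod_nat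

lemma tendsto_inv_qPochhammer (hq : ‖q‖ < 1) :
    Tendsto (fun n => (qPochhammer q n)⁻¹) atTop (𝓝 (∏' n : ℕ, (1 - q ^ (n + 1)))⁻¹) :=
  (tendsto_qPochhammer hq).inv₀ (tprod_one_sub_pow_succ_ne_zero hq)

lemma tendsto_qChoose_add {α : Type*} {l : Filter α} {m k : α → ℕ} (hq : ‖q‖ < 1)
    (hm : Tendsto m l atTop) (hk : Tendsto k l atTop) :
    Tendsto (fun i => qChoose q (m i + k i) (k i)) l (𝓝 (∏' n : ℕ, (1 - q ^ (n + 1)))⁻¹) := by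
  have hmk : Tendsto (fun i => m i + k i) l atTop :=
    tendsto_atTop_mono (fun i => Nat.le_add_right (m i) (k i)) hm
  have h := (((tendsto_qPochhammer hq).comp hmk).mul
    ((tendsto_inv_qPochhammer hq).comp hm)).mul ((tendsto_inv_qPochhammer hq).comp hk)
  rw [mul_inv_cancel₀ (tprod_one_sub_pow_succ_ne_zero hq), one_mul] at h
  exact h.congr fun i => (qChoose_add_eq_div hq (m i) (k i)).symm

lemma exists_norm_qChoose_le (hq : ‖q‖ < 1) : ∃ C, ∀ n k, ‖qChoose q n k‖ ≤ C := by
  obtain ⟨A, hA⟩ :=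
    (Metric.isBounded_range_of_tendsto _ (tendsto_qPochhammer hq)).exists_norm_le
  obtain ⟨B, hB⟩ :=
    (Metric.isBounded_range_of_tendsto _ (tendsto_inv_qPochhammer hq)).exists_norm_le
  simp only [Set.forall_mem_range] at hA hB
  have hA₀ : 0 ≤ A := (norm_nonneg _).trans (hA 0)
  have hB₀ : 0 ≤ B := (norm_nonneg _).trans (hB 0)
  refine ⟨A * B * B, fun n k => ?_⟩
  rcases lt_or_ge n k with h | h
  · rw [qChoose_eq_zero_of_lt q h, norm_zero]
    positivity
  · obtain ⟨m, rfl⟩ := Nat.exists_eq_add_of_le' h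
    rw [qChoose_add_eq_div hq, norm_mul, norm_mul]
    gcongr
    exacts [hA _, hB _, hB _]

lemma tendsto_tripleProductCoeff (hq : ‖q‖ < 1) (j : ℕ) :
    Tendsto (fun n => tripleProductCoeff q n j) atTop
      (𝓝 ((-1) ^ j * q ^ (j * (j + 1) / 2) * (∏' n : ℕ, (1 - q ^ (n + 1)))⁻¹)) := by
  refine Tendsto.const_mul _ ((tendsto_qChoose_add hq (tendsto_sub_atTop_nat j)
    (tendsto_add_atTop_nat (j + 1))).congr' ?_)
  filter_upwards [eventually_ge_atTop j] with n hn
  rw [← Nat.add_assoc n j 1, show n - j + (n + j + 1) = 2 * n + 1 by omega]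

lemma multipliable_one_sub_mul_pow_add_sq (hq : ‖q‖ < 1) (c : 𝕜) :
    Multipliable fun n : ℕ => 1 - c * q ^ (n + 1) + (q ^ (n + 1)) ^ 2 := by
  have hq2 : ‖q ^ 2‖ < 1 := by
    simpa using pow_lt_one₀ (norm_nonneg q) hq two_ne_zero
  have hsq : Summable fun n : ℕ => ‖(q ^ (n + 1)) ^ 2‖ := by
    simpa only [pow_right_comm q _ 2] using summable_norm_pow_succ hq2
  have hlin : Summable fun n : ℕ => ‖c * q ^ (n + 1)‖ := by
    simpa only [norm_mul] using (summable_norm_pow_succ hq).mul_left ‖c‖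
  have h := multipliable_one_add_of_summable (f := fun n : ℕ => (q ^ (n + 1)) ^ 2 - c * q ^ (n + 1))
    ((hsq.add hlin).of_nonneg_of_le (fun _ => norm_nonneg _) fun _ => norm_sub_le _ _)
  exact h.congr fun n => by ring

theorem tsum_neg_one_pow_mul_pow_triangle_mul {c : 𝕜} {s : ℕ → 𝕜} (hq : ‖q‖ < 1)
    (hs₁ : s 1 = (c + 1) * s 0) (hs : ∀ j, s (j + 2) = c * s (j + 1) - s j)
    (hsum : Summable fun j => ‖q ^ (j * (j + 1) / 2) * s j‖) :
    ∑' j, (-1) ^ j * q ^ (j * (j + 1) / 2) * s j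
      = s 0 * (∏' n : ℕ, (1 - q ^ (n + 1)))
        * ∏' n : ℕ, (1 - c * q ^ (n + 1) + (q ^ (n + 1)) ^ 2) := by
  obtain ⟨C, hC⟩ := exists_norm_qChoose_le hq
  have hfinite (n : ℕ) : ∑' j, tripleProductCoeff q n j * s j
      = s 0 * ∏ i ∈ Finset.range n, (1 - c * q ^ (i + 1) + (q ^ (i + 1)) ^ 2) := by
    rw [← sum_range_tripleProductCoeff_mul q hs₁ hs]
    refine tsum_eq_sum fun j hj => ?_
    rw [tripleProductCoeff_eq_zero_of_lt q (by simpa using hj), zero_mul]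
  have hbound (n j : ℕ) :
      ‖tripleProductCoeff q n j * s j‖ ≤ ‖q ^ (j * (j + 1) / 2) * s j‖ * C := by
    calc ‖tripleProductCoeff q n j * s j‖
        = ‖q ^ (j * (j + 1) / 2) * s j‖ * ‖qChoose q (2 * n + 1) (n + j + 1)‖ := by
          simp only [tripleProductCoeff, norm_mul, norm_pow, norm_neg, norm_one, one_pow]
          ring
      _ ≤ ‖q ^ (j * (j + 1) / 2) * s j‖ * C := by gcongr; exact hC _ _
  have hleft := tendsto_tsum_of_dominated_convergence (hsum.mul_right C)
    (fun j => (tendsto_tripleProductCoeff hq j).mul_const (s j))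
    (Eventually.of_forall fun n j => hbound n j)
  have hright := (multipliable_one_sub_mul_pow_add_sq hq c).hasProd.tendsto_prod_nat.const_mul (s 0)
  have hlim := tendsto_nhds_unique hleft (hright.congr fun n => (hfinite n).symm)
  simp_rw [mul_right_comm _ (_)⁻¹] at hlim
  rw [tsum_mul_right, mul_inv_eq_iff_eq_mul₀ (tprod_one_sub_pow_succ_ne_zero hq)] at hlim
  rw [hlim, mul_right_comm]

theorem tsum_neg_one_pow_mul_odd_mul_pow_triangle (hq : ‖q‖ < 1) :
    ∑' j : ℕ, (-1) ^ j * ((2 * j + 1 : ℕ) : 𝕜) * q ^ (j * (j + 1) / 2)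
      = (∏' n : ℕ, (1 - q ^ (n + 1))) ^ 3 := by
  have htriple := tsum_neg_one_pow_mul_pow_triangle_mul (c := 2)
    (s := fun j => ((2 * j + 1 : ℕ) : 𝕜)) hq (by norm_num) (fun j => by push_cast; ring)
    (summable_norm_pow_triangle_mul_odd hq)
  have hsquare : ∏' n : ℕ, (1 - 2 * q ^ (n + 1) + (q ^ (n + 1)) ^ 2)
      = (∏' n : ℕ, (1 - q ^ (n + 1))) ^ 2 := by
    rw [← (multipliable_one_sub_pow_succ hq).tprod_pow]
    exact tprod_congr fun n => by ring
  simp_rw [mul_right_comm _ _ (q ^ _)]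
  rw [htriple, hsquare]
  push_cast
  ring

end TripleProduct

section SineSeries

lemma hasSum_taylor_tsum_mul_sin {ι : Type*} {a b : ι → ℂ} {w : ℂ}
    (h : Summable fun j => ‖a j‖ * Real.sinh (‖b j‖ * ‖w‖)) :
    HasSum (fun n : ℕ => (-1) ^ n * (∑' j, a j * b j ^ (2 * n + 1)) * w ^ (2 * n + 1)
        / (Nat.factorial (2 * n + 1) : ℂ))
      (∑' j, a j * Complex.sin (b j * w)) := by
  let F : ι × ℕ → ℂ := fun p =>
    a p.1 * ((-1) ^ p.2 * (b p.1 * w) ^ (2 * p.2 + 1) / (Nat.factorial (2 * p.2 + 1) : ℂ))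
  have hrow (j : ι) : HasSum (fun n => F (j, n)) (a j * Complex.sin (b j * w)) :=
    (Complex.hasSum_sin (b j * w)).mul_left (a j)
  have hnorm_row (j : ι) :
      HasSum (fun n => ‖F (j, n)‖) (‖a j‖ * Real.sinh (‖b j‖ * ‖w‖)) := by
    simpa [F] using (Real.hasSum_sinh (‖b j‖ * ‖w‖)).mul_left ‖a j‖
  have hF : Summable F := by
    refine Summable.of_norm ((summable_prod_of_nonneg fun p => norm_nonneg (F p)).2
      ⟨fun j => (hnorm_row j).summable, ?_⟩)
    simpa only [(hnorm_row _).tsum_eq] using h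
  have hcolumns : HasSum (fun n => ∑' j, F (j, n)) (∑' p, F p) := by
    rw [← (Equiv.prodComm ℕ ι).tsum_eq F]
    exact hF.prod_symm.hasSum.prod_fiberwise fun n => (hF.prod_symm.prod_factor n).hasSum
  rw [← (hF.hasSum.prod_fiberwise hrow).tsum_eq] at hcolumns
  refine hcolumns.congr_fun fun n => ?_
  rw [mul_right_comm, mul_comm, ← tsum_mul_right, ← tsum_div_const]
  exact tsum_congr fun j => by simp only [F]; ring

theorem hasSum_Uram {q : ℂ} (hq : ‖q‖ < 1) (w : ℂ) :
    HasSum (fun n : ℕ =>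
        (-1) ^ n * Uram n q * w ^ (2 * n + 1) / (Nat.factorial (2 * n + 1) : ℂ))
      ((∑' j : ℕ, (-1) ^ j * q ^ (j * (j + 1) / 2) * Complex.sin ((2 * j + 1 : ℕ) * w))
        / (∏' n : ℕ, (1 - q ^ (n + 1))) ^ 3) := by
  have htaylor := hasSum_taylor_tsum_mul_sin (a := fun j : ℕ => (-1) ^ j * q ^ (j * (j + 1) / 2))
    (b := fun j => ((2 * j + 1 : ℕ) : ℂ)) (w := w) (by
      simpa only [norm_mul, norm_pow, norm_neg, norm_one, one_pow, one_mul, Complex.norm_natCast]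
        using summable_norm_pow_triangle_mul_sinh hq ‖w‖)
  refine (htaylor.div_const _).congr_fun fun n => ?_
  simp_rw [Uram, tsum_neg_one_pow_mul_odd_mul_pow_triangle hq, mul_right_comm ((-1) ^ _) (q ^ _)]
  ring

end SineSeries

section Theta

/-- The summand of `jacobiThetaFn z τ` with index `n + 1/2`. -/
def jacobiThetaFnTerm (n : ℤ) (z τ : ℂ) : ℂ :=
  Complex.exp (2 * (π : ℂ) * I * ((n : ℂ) + 1 / 2) * (z + 1 / 2)) *
    Complex.exp ((π : ℂ) * I * τ * ((n : ℂ) + 1 / 2) ^ 2)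

lemma hasSum_jacobiThetaFnTerm {τ : ℂ} (hτ : 0 < τ.im) (z : ℂ) :
    HasSum (fun n => jacobiThetaFnTerm n z τ) (jacobiThetaFn z τ) := by
  have hterm (n : ℤ) : jacobiThetaFnTerm n z τ
      = Complex.exp (π * I * (z + 1 / 2) + π * I * τ / 4)
        * jacobiTheta₂_term n (z + 1 / 2 + τ / 2) τ := by
    rw [jacobiThetaFnTerm, jacobiTheta₂_term, ← Complex.exp_add, ← Complex.exp_add]
    ring_nf
  have hsummable : Summable fun n => jacobiThetaFnTerm n z τ := by
    simpa only [hterm] using (hasSum_jacobiTheta₂_term (z + 1 / 2 + τ / 2) hτ).summable.mul_left _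
  exact hsummable.hasSum

lemma exp_pi_mul_I_mul_add_half_sq (τ : ℂ) (j : ℕ) :
    Complex.exp (π * I * τ * ((j : ℂ) + 1 / 2) ^ 2)
      = Complex.exp (2 * π * I * τ / 8) * qq τ ^ (j * (j + 1) / 2) := by
  rw [qq, ← Complex.exp_nat_mul, ← Complex.exp_add,
    Nat.cast_div (Nat.even_mul_succ_self j).two_dvd (by norm_num)]
  push_cast
  ring_nf

lemma jacobiThetaFnTerm_add_jacobiThetaFnTerm_neg (j : ℕ) (z τ : ℂ) :
    jacobiThetaFnTerm j z τ + jacobiThetaFnTerm (-(j + 1)) z τ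
      = (-(2 * Complex.exp (2 * π * I * τ / 8))) *
        ((-1) ^ j * qq τ ^ (j * (j + 1) / 2) * Complex.sin ((2 * j + 1 : ℕ) * (π * z))) := by
  set x : ℂ := (2 * j + 1 : ℕ) * (π * z) + j * π + π / 2 with hx
  have hcos : Complex.cos x = -((-1) ^ j * Complex.sin ((2 * j + 1 : ℕ) * (π * z))) := by
    rw [hx, Complex.cos_add_pi_div_two, Complex.sin_antiperiodic.add_nat_mul_eq j]
  have hpos : jacobiThetaFnTerm j z τ
      = Complex.exp (x * I) * Complex.exp (π * I * τ * ((j : ℂ) + 1 / 2) ^ 2) := by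
    rw [jacobiThetaFnTerm, hx]
    push_cast
    ring_nf
  have hneg : jacobiThetaFnTerm (-(j + 1)) z τ
      = Complex.exp (-x * I) * Complex.exp (π * I * τ * ((j : ℂ) + 1 / 2) ^ 2) := by
    rw [jacobiThetaFnTerm, hx]
    push_cast
    ring_nf
  rw [hpos, hneg, ← add_mul, ← Complex.two_cos, hcos, exp_pi_mul_I_mul_add_half_sq]
  ring

theorem hasSum_sin_jacobiThetaFn {τ : ℂ} (hτ : 0 < τ.im) (z : ℂ) :
    HasSum (fun j : ℕ =>
        (-1) ^ j * qq τ ^ (j * (j + 1) / 2) * Complex.sin ((2 * j + 1 : ℕ) * (π * z)))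
      (-jacobiThetaFn z τ / (2 * Complex.exp (2 * π * I * τ / 8))) := by
  have hpaired := (hasSum_jacobiThetaFnTerm hτ z).nat_add_neg_add_one
  simp_rw [jacobiThetaFnTerm_add_jacobiThetaFnTerm_neg] at hpaired
  rw [neg_div, ← div_neg]
  refine (hpaired.div_const _).congr_fun fun j => ?_
  rw [mul_div_cancel_left₀ _ (by simp)]

lemma norm_qq_lt_one {τ : ℂ} (hτ : 0 < τ.im) : ‖qq τ‖ < 1 :=
  UpperHalfPlane.norm_exp_two_pi_I_lt_one ⟨τ, hτ⟩

lemma dedekindEtaFn_pow_three (τ : ℂ) :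
    dedekindEtaFn τ ^ 3
      = Complex.exp (2 * π * I * τ / 8) * (∏' n : ℕ, (1 - qq τ ^ (n + 1))) ^ 3 := by
  rw [dedekindEtaFn, mul_pow, ← Complex.exp_nat_mul]
  push_cast
  ring_nf

end Theta

/-- For every `τ ∈ ℍ` and every `z ∈ ℂ`,
`∑_{n≥0} (−1)^n U_{2n}(q) (πz)^{2n+1}/(2n+1)! = −ϑ(z;τ)/(2η(τ)³)`,
the series converging for all `z ∈ ℂ`. -/
theorem U_generating_function_theta
    (τ : ℂ) (hτ : 0 < τ.im) (z : ℂ) :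
    HasSum (fun n : ℕ =>
        (-1 : ℂ) ^ n * Uram n (qq τ) * ((π : ℂ) * z) ^ (2 * n + 1) /
          (Nat.factorial (2 * n + 1) : ℂ))
      (-jacobiThetaFn z τ / (2 * dedekindEtaFn τ ^ 3)) := by
  have htheta : -jacobiThetaFn z τ / (2 * dedekindEtaFn τ ^ 3)
      = (∑' j : ℕ, (-1) ^ j * qq τ ^ (j * (j + 1) / 2) * Complex.sin ((2 * j + 1 : ℕ) * (π * z)))
        / (∏' n : ℕ, (1 - qq τ ^ (n + 1))) ^ 3 := by
    rw [(hasSum_sin_jacobiThetaFn hτ z).tsum_eq, dedekindEtaFn_pow_three, ← mul_assoc, div_div]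
  rw [htheta]
  exact hasSum_Uram (norm_qq_lt_one hτ) (π * z)
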